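/- Let λ∈(0,1) and let A,B ⊆ ℝⁿ_{>0} (the open positive orthant) be Lebesgue measurable sets such that A^{1−λ}B^{λ} is also measurable. Then vol(A^{1−λ}B^{λ}) ≥ vol(A)^{1−λ}·vol(B)^{λ}. -/

import Mathlib

open MeasureTheory Set Metric Filter
open scoped ENNReal NNReal Topology Pointwise

noncomputable section

/-- The `d`-convex combination `(1-λ)A ⋆_d λB` of two sets. -/
def starComb {Z : Type*} (d : Z → Z → ℝ) (lam : ℝ) (A B : Set Z) : Set Z :=
  {z | ∃ a ∈ A, ∃ b ∈ B, d z a = lam * d a b ∧ d z b = (1 - lam) * d a b}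

/-- A distance is strictly intrinsic: closed balls of radii summing to the distance
between their centers intersect. -/
def StrictlyIntrinsicDist {Z : Type*} (d : Z → Z → ℝ) : Prop :=
  ∀ x y : Z, ∀ r₁ r₂ : ℝ, 0 ≤ r₁ → 0 ≤ r₂ → r₁ + r₂ = d x y →
    ∃ z : Z, d z x ≤ r₁ ∧ d z y ≤ r₂

/-- The ℓ² (Euclidean) product metric on `X × Y`. -/
def rho {X Y : Type*} [PseudoMetricSpace X] [PseudoMetricSpace Y] (a b : X × Y) : ℝ :=
  Real.sqrt (dist a.1 b.1 ^ 2 + dist a.2 b.2 ^ 2)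

/-- The ℓ² (Euclidean) metric on a finite product of copies of a metric space. -/
def rhoPi {ι : Type*} [Fintype ι] {X : Type*} [PseudoMetricSpace X] (a b : ι → X) : ℝ :=
  Real.sqrt (∑ i, dist (a i) (b i) ^ 2)

open Classical in
/-- The `p`-th mean `M_p(a,b,λ)` of `a, b ∈ [0,∞]`, for `p ∈ ℝ ∪ {±∞}`, with the
convention that it vanishes whenever `a * b = 0`. -/
def Mp (p : EReal) (lam : ℝ) (a b : ℝ≥0∞) : ℝ≥0∞ :=
  if a = 0 ∨ b = 0 then 0
  else if p = ⊤ then max a b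
  else if p = ⊥ then min a b
  else if p = 0 then a ^ (1 - lam) * b ^ lam
  else (ENNReal.ofReal (1 - lam) * a ^ p.toReal + ENNReal.ofReal lam * b ^ p.toReal) ^ (1 / p.toReal)

open Classical in
/-- The `p`-th mean `M_p(a,b,λ)` of nonnegative reals, with the zero convention. -/
def MpR (p : EReal) (lam a b : ℝ) : ℝ :=
  if a = 0 ∨ b = 0 then 0
  else if p = ⊤ then max a b
  else if p = ⊥ then min a b
  else if p = 0 then a ^ (1 - lam) * b ^ lam
  else ((1 - lam) * a ^ p.toReal + lam * b ^ p.toReal) ^ (1 / p.toReal)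

/-- `(X,d,μ)` satisfies `BM(p)`. -/
def SatisfiesBM {X : Type*} [MeasurableSpace X] (d : X → X → ℝ) (μ : Measure X)
    (p : EReal) : Prop :=
  ∀ lam : ℝ, lam ∈ Ioo (0:ℝ) 1 → ∀ A B C : Set X, A.Nonempty → B.Nonempty →
    MeasurableSet A → MeasurableSet B → MeasurableSet C →
    μ A ≠ 0 → μ B ≠ 0 → starComb d lam A B ⊆ C →
    Mp p lam (μ A) (μ B) ≤ μ C

/-- `(X,d,μ)` satisfies the general (linear) inequality `B̄M(1)`:
`μ(C) ≥ (1-λ)μ(A) + λμ(B)` for all nonempty measurable `A, B, C` with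
`C ⊇ (1-λ)A ⋆ λB`. -/
def SatisfiesBMbarLinear {X : Type*} [MeasurableSpace X] (d : X → X → ℝ)
    (μ : Measure X) : Prop :=
  ∀ lam : ℝ, lam ∈ Ioo (0:ℝ) 1 → ∀ A B C : Set X, A.Nonempty → B.Nonempty →
    MeasurableSet A → MeasurableSet B → MeasurableSet C →
    starComb d lam A B ⊆ C →
    ENNReal.ofReal (1 - lam) * μ A + ENNReal.ofReal lam * μ B ≤ μ C

/-- `(X,d,μ)` satisfies the general inequality `B̄M(p)` for a real `p > 0`:
`μ(C) ≥ ((1-λ)μ(A)^p + λμ(B)^p)^{1/p}` for all nonempty measurable `A, B, C`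
with `C ⊇ (1-λ)A ⋆ λB`. -/
def SatisfiesBMbarPos {X : Type*} [MeasurableSpace X] (d : X → X → ℝ) (μ : Measure X)
    (p : ℝ) : Prop :=
  ∀ lam : ℝ, lam ∈ Ioo (0:ℝ) 1 → ∀ A B C : Set X, A.Nonempty → B.Nonempty →
    MeasurableSet A → MeasurableSet B → MeasurableSet C →
    starComb d lam A B ⊆ C →
    (ENNReal.ofReal (1 - lam) * μ A ^ p + ENNReal.ofReal lam * μ B ^ p) ^ (1/p) ≤ μ C

/-- `(X,d,μ)` satisfies the weighted inequality `BM(p,q)`: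
`μ(C)^p ≥ (1-λ)^q μ(A)^p + λ^q μ(B)^p` for all nonempty measurable sets of positive
measure with `C ⊇ (1-λ)A ⋆ λB`. -/
def SatisfiesBMW {X : Type*} [MeasurableSpace X] (d : X → X → ℝ) (μ : Measure X)
    (p q : ℝ) : Prop :=
  ∀ lam : ℝ, lam ∈ Ioo (0:ℝ) 1 → ∀ A B C : Set X, A.Nonempty → B.Nonempty →
    MeasurableSet A → MeasurableSet B → MeasurableSet C →
    μ A ≠ 0 → μ B ≠ 0 → starComb d lam A B ⊆ C →
    ENNReal.ofReal ((1 - lam) ^ q) * μ A ^ p + ENNReal.ofReal (lam ^ q) * μ B ^ p ≤ μ C ^ p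

/-- `(X,d,μ)` satisfies the Prékopa–Leindler inequality `PL`. -/
def SatisfiesPL {X : Type*} [MeasurableSpace X] (d : X → X → ℝ) (μ : Measure X) : Prop :=
  ∀ lam : ℝ, lam ∈ Ioo (0:ℝ) 1 → ∀ f g h : X → ℝ≥0∞,
    Measurable f → Measurable g → Measurable h →
    (∀ x y z : X, d z x = lam * d x y → d z y = (1 - lam) * d x y →
      f x ^ (1 - lam) * g y ^ lam ≤ h z) →
    (∫⁻ x, f x ∂μ) ^ (1 - lam) * (∫⁻ x, g x ∂μ) ^ lam ≤ ∫⁻ x, h x ∂μ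

open Classical in
/-- `(X,d,μ)` satisfies the Borell–Brascamp–Lieb inequality `BBL(p,m)`. -/
def SatisfiesBBL {X : Type*} [MeasurableSpace X] (d : X → X → ℝ) (μ : Measure X)
    (p m : ℝ) : Prop :=
  ∀ lam : ℝ, lam ∈ Ioo (0:ℝ) 1 → ∀ f g h : X → ℝ≥0∞,
    Measurable f → Measurable g → Measurable h →
    (∀ x y z : X, d z x = lam * d x y → d z y = (1 - lam) * d x y →
      Mp (p : EReal) lam (f x) (g y) ≤ h z) →
    Mp (if m * p + 1 = 0 then (⊥ : EReal) else ((p / (m * p + 1) : ℝ) : EReal)) lam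
      (∫⁻ x, f x ∂μ) (∫⁻ x, g x ∂μ) ≤ ∫⁻ x, h x ∂μ

/-- `φ : ℝ → ℝ` is positively decreasing: `t ↦ φ(t)` and `t ↦ φ(-t)` are
non-increasing on `[0,∞)`. -/
def PositivelyDecreasing (φ : ℝ → ℝ) : Prop :=
  (∀ s t : ℝ, 0 ≤ s → s ≤ t → φ t ≤ φ s) ∧ (∀ s t : ℝ, 0 ≤ s → s ≤ t → φ (-t) ≤ φ (-s))

/-- A set `A ⊆ ℝⁿ` is weakly unconditional. -/
def WeaklyUnconditional {n : ℕ} (A : Set (Fin n → ℝ)) : Prop :=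
  ∀ x ∈ A, ∀ ε : Fin n → ℝ, (∀ i, ε i = 0 ∨ ε i = 1) → (fun i => ε i * x i) ∈ A

/-- A nonnegative function on a real vector space is `p`-concave. -/
def PConcaveFn {E : Type*} [AddCommGroup E] [Module ℝ E] (p : EReal) (φ : E → ℝ) : Prop :=
  ∀ x y : E, ∀ lam : ℝ, lam ∈ Ioo (0:ℝ) 1 →
    MpR p lam (φ x) (φ y) ≤ φ ((1 - lam) • x + lam • y)

/-- A function on a real vector space is radially decreasing. -/
def RadiallyDecreasing {E : Type*} [AddCommGroup E] [Module ℝ E] (φ : E → ℝ) : Prop :=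
  ∀ x : E, ∀ t : ℝ, t ∈ Icc (0:ℝ) 1 → φ x ≤ φ (t • x)


/-!
Call a measure *Prékopa–Leindler* for an operation `m` when
`f x ^ (1 - lam) * g y ^ lam ≤ h (m x y)` for all `x`, `y` implies
`(∫ f) ^ (1 - lam) * (∫ g) ^ lam ≤ ∫ h`. This property passes to products (Fubini), to images under
maps intertwining the operations, and to log-concave densities.

Lebesgue measure on `ℝ` has it for `(1 - lam) * x + lam * y`: after scaling `f` and `g` to a common
supremum, the superlevel sets of `h` contain the weighted sumsets of those of `f` and `g`, so the
one-dimensional Brunn–Minkowski inequality can be integrated over the levels, and AM–GM finishes.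

The exponential turns arithmetic means into geometric means and the density `exp`, for which
log-concavity is an equality, into Lebesgue measure on `(0, ∞)`. Taking products gives the property
on the positive orthant, and indicator functions give the inequality for sets.
-/

section OneDimensionalBrunnMinkowski

-- The translates `K + min L` and `max K + L` lie in `K + L` and meet only at `max K + min L`.
lemma volume_add_volume_le_of_isCompact {K L : Set ℝ} (hK : IsCompact K) (hL : IsCompact L)
    (hK₀ : K.Nonempty) (hL₀ : L.Nonempty) : volume K + volume L ≤ volume (K + L) := by
  obtain ⟨a, haK, ha⟩ := hK.exists_isGreatest hK₀
  obtain ⟨b, hbL, hb⟩ := hL.exists_isLeast hL₀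
  have inter_subset : (· + b) '' K ∩ (a + ·) '' L ⊆ {a + b} := by
    rintro _ ⟨⟨x, hx, rfl⟩, y, hy, hxy⟩
    have hxa := ha hx
    have hby := hb hy
    simp only [mem_singleton_iff] at hxy ⊢
    linarith
  have aedisjoint : AEDisjoint volume ((· + b) '' K) ((a + ·) '' L) :=
    measure_mono_null inter_subset (measure_singleton _)
  have union_subset : (· + b) '' K ∪ (a + ·) '' L ⊆ K + L := by
    rintro _ (⟨x, hx, rfl⟩ | ⟨y, hy, rfl⟩)
    · exact add_mem_add hx hbL
    · exact add_mem_add haK hy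
  calc volume K + volume L
      = volume ((· + b) '' K) + volume ((a + ·) '' L) := by
        simp only [image_add_right, measure_preimage_add_right, image_add_left,
          measure_preimage_add]
    _ = volume ((· + b) '' K ∪ (a + ·) '' L) :=
        (measure_union₀ (hL.image (by fun_prop)).measurableSet.nullMeasurableSet aedisjoint).symm
    _ ≤ volume (K + L) := measure_mono union_subset

lemma volume_add_volume_le {A B : Set ℝ} (hA : MeasurableSet A) (hB : MeasurableSet B)
    (hA₀ : A.Nonempty) (hB₀ : B.Nonempty) : volume A + volume B ≤ volume (A + B) := by
  obtain ⟨a, ha⟩ := hA₀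
  obtain ⟨b, hb⟩ := hB₀
  rw [hA.measure_eq_iSup_isCompact, hB.measure_eq_iSup_isCompact]
  simp only [iSup_and']
  refine ENNReal.biSup_add_biSup_le' ⟨∅, empty_subset A, isCompact_empty⟩
    ⟨∅, empty_subset B, isCompact_empty⟩ ?_
  rintro K ⟨hKA, hK⟩ L ⟨hLB, hL⟩
  calc volume K + volume L
      ≤ volume (insert a K) + volume (insert b L) := by gcongr <;> exact subset_insert _ _
    _ ≤ volume (insert a K + insert b L) :=
        volume_add_volume_le_of_isCompact (hK.insert a) (hL.insert b) (insert_nonempty _ _)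
          (insert_nonempty _ _)
    _ ≤ volume (A + B) :=
        measure_mono (add_subset_add (insert_subset ha hKA) (insert_subset hb hLB))

lemma ofReal_abs_mul_volume_add_le (a b : ℝ) {A B : Set ℝ} (hA : MeasurableSet A)
    (hB : MeasurableSet B) (hA₀ : A.Nonempty) (hB₀ : B.Nonempty) :
    ENNReal.ofReal |a| * volume A + ENNReal.ofReal |b| * volume B ≤ volume (a • A + b • B) := by
  simpa only [Measure.addHaar_smul, Module.finrank_self, pow_one] using
    volume_add_volume_le (hA.const_smul₀ a) (hB.const_smul₀ b) hA₀.smul_set hB₀.smul_set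

end OneDimensionalBrunnMinkowski

section LayerCake

variable {X : Type*} [MeasurableSpace X]

lemma volume_setOf_ofReal_lt_inter_Ioi (c : ℝ≥0∞) :
    volume ({t : ℝ | ENNReal.ofReal t < c} ∩ Ioi 0) = c := by
  obtain rfl | hc := eq_or_ne c ∞
  · simp
  · have h_eq : {t : ℝ | ENNReal.ofReal t < c} ∩ Ioi 0 = Ioo 0 c.toReal := by
      ext t
      simp only [mem_inter_iff, mem_ofPred_eq, mem_Ioi, mem_Ioo, and_comm (b := 0 < t)]
      exact and_congr_right fun ht ↦ ENNReal.ofReal_lt_iff_lt_toReal ht.le hc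
    rw [h_eq, Real.volume_Ioo, sub_zero, ENNReal.ofReal_toReal hc]

lemma lintegral_eq_lintegral_measure_ofReal_lt (μ : Measure X) [SFinite μ] {f : X → ℝ≥0∞}
    (hf : Measurable f) :
    ∫⁻ x, f x ∂μ = ∫⁻ t in Ioi (0 : ℝ), μ {x | ENNReal.ofReal t < f x} := by
  have region : MeasurableSet {p : X × ℝ | ENNReal.ofReal p.2 < f p.1} :=
    measurableSet_lt (by fun_prop) (by fun_prop)
  calc ∫⁻ x, f x ∂μ
      = ∫⁻ x, volume.restrict (Ioi (0 : ℝ)) {t | ENNReal.ofReal t < f x} ∂μ := by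
        simp only [Measure.restrict_apply' measurableSet_Ioi, volume_setOf_ofReal_lt_inter_Ioi]
    _ = μ.prod (volume.restrict (Ioi (0 : ℝ))) {p | ENNReal.ofReal p.2 < f p.1} :=
        (Measure.prod_apply region).symm
    _ = ∫⁻ t in Ioi (0 : ℝ), μ {x | ENNReal.ofReal t < f x} := Measure.prod_apply_symm region

lemma lintegral_eq_iSup_lintegral_min_natCast (μ : Measure X) {f : X → ℝ≥0∞} (hf : Measurable f) :
    ∫⁻ x, f x ∂μ = ⨆ k : ℕ, ∫⁻ x, min (f x) k ∂μ := by
  rw [← lintegral_iSup (fun k ↦ hf.min measurable_const)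
    fun i j hij x ↦ min_le_min_left _ (Nat.cast_le.2 hij)]
  exact lintegral_congr fun x ↦ by rw [← inf_iSup_eq, ENNReal.iSup_natCast, inf_top_eq]

lemma ofReal_abs_mul_lintegral_add_le (a b : ℝ) {f g h : ℝ → ℝ≥0∞} (hf : Measurable f)
    (hg : Measurable g) (hh : Measurable h) (hsup : ⨆ x, f x = ⨆ y, g y)
    (hfgh : ∀ x y, min (f x) (g y) ≤ h (a * x + b * y)) :
    ENNReal.ofReal |a| * (∫⁻ x, f x) + ENNReal.ofReal |b| * (∫⁻ y, g y) ≤ ∫⁻ z, h z := by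
  have measurable_level (u : ℝ → ℝ≥0∞) :
      Measurable fun t : ℝ ↦ volume {x | ENNReal.ofReal t < u x} :=
    Antitone.measurable fun s t hst ↦
      measure_mono fun x hx ↦ (ENNReal.ofReal_le_ofReal hst).trans_lt hx
  rw [lintegral_eq_lintegral_measure_ofReal_lt volume hf,
    lintegral_eq_lintegral_measure_ofReal_lt volume hg,
    lintegral_eq_lintegral_measure_ofReal_lt volume hh,
    ← lintegral_const_mul _ (measurable_level f), ← lintegral_const_mul _ (measurable_level g),
    ← lintegral_add_left ((measurable_level f).const_mul _)]
  refine lintegral_mono fun t ↦ ?_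
  by_cases ht : ENNReal.ofReal t < ⨆ x, f x
  · have hf₀ : {x | ENNReal.ofReal t < f x}.Nonempty := lt_iSup_iff.1 ht
    have hg₀ : {y | ENNReal.ofReal t < g y}.Nonempty := lt_iSup_iff.1 (ht.trans_eq hsup)
    refine (ofReal_abs_mul_volume_add_le a b (measurableSet_lt measurable_const hf)
      (measurableSet_lt measurable_const hg) hf₀ hg₀).trans (measure_mono ?_)
    rintro _ ⟨_, ⟨x, hx, rfl⟩, _, ⟨y, hy, rfl⟩, rfl⟩
    exact (lt_min hx hy).trans_le (hfgh x y)
  · have level_eq_empty {u : ℝ → ℝ≥0∞} (hu : ⨆ x, u x ≤ ENNReal.ofReal t) :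
        {x | ENNReal.ofReal t < u x} = ∅ :=
      eq_empty_of_forall_notMem fun x hx ↦ hx.not_ge ((le_iSup u x).trans hu)
    simp [level_eq_empty (not_lt.1 ht), level_eq_empty (hsup.symm.trans_le (not_lt.1 ht))]

end LayerCake

section WeightedGeometricMean

variable {lam : ℝ}

lemma ennreal_geom_mean_le_arith_mean (hlam : lam ∈ Icc (0 : ℝ) 1) (x y : ℝ≥0∞) :
    x ^ (1 - lam) * y ^ lam ≤ ENNReal.ofReal (1 - lam) * x + ENNReal.ofReal lam * y := by
  obtain rfl | h₀ := hlam.1.eq_or_lt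
  · simp
  obtain rfl | hlam_lt := hlam.2.eq_or_lt
  · simp
  have h₁ : 0 < 1 - lam := sub_pos.2 hlam_lt
  obtain rfl | hx := eq_or_ne x ∞
  · simp [ENNReal.mul_top (ENNReal.ofReal_pos.2 h₁).ne']
  obtain rfl | hy := eq_or_ne y ∞
  · simp [ENNReal.mul_top (ENNReal.ofReal_pos.2 h₀).ne']
  rw [← ENNReal.ofReal_toReal hx, ← ENNReal.ofReal_toReal hy,
    ENNReal.ofReal_rpow_of_nonneg ENNReal.toReal_nonneg h₁.le,
    ENNReal.ofReal_rpow_of_nonneg ENNReal.toReal_nonneg h₀.le,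
    ← ENNReal.ofReal_mul (by positivity), ← ENNReal.ofReal_mul h₁.le, ← ENNReal.ofReal_mul h₀.le,
    ← ENNReal.ofReal_add (by positivity) (by positivity)]
  exact ENNReal.ofReal_le_ofReal <| Real.geom_mean_le_arith_mean2_weighted h₁.le h₀.le
    ENNReal.toReal_nonneg ENNReal.toReal_nonneg (by ring)

lemma mul_rpow_mul_mul_rpow (hlam : lam ∈ Icc (0 : ℝ) 1) (a b x y : ℝ≥0∞) :
    (a * x) ^ (1 - lam) * (b * y) ^ lam
      = (a ^ (1 - lam) * b ^ lam) * (x ^ (1 - lam) * y ^ lam) := by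
  rw [ENNReal.mul_rpow_of_nonneg _ _ (sub_nonneg.2 hlam.2), ENNReal.mul_rpow_of_nonneg _ _ hlam.1,
    mul_mul_mul_comm]

lemma rpow_mul_rpow_le (hlam : lam ∈ Icc (0 : ℝ) 1) {x x' y y' : ℝ≥0∞} (hx : x ≤ x')
    (hy : y ≤ y') : x ^ (1 - lam) * y ^ lam ≤ x' ^ (1 - lam) * y' ^ lam :=
  mul_le_mul' (ENNReal.rpow_le_rpow hx (sub_nonneg.2 hlam.2)) (ENNReal.rpow_le_rpow hy hlam.1)

lemma min_le_rpow_mul_rpow (hlam : lam ∈ Icc (0 : ℝ) 1) (x y : ℝ≥0∞) :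
    min x y ≤ x ^ (1 - lam) * y ^ lam :=
  calc min x y = min x y ^ (1 - lam) * min x y ^ lam := by
        rw [← ENNReal.rpow_add_of_nonneg _ _ (sub_nonneg.2 hlam.2) hlam.1, sub_add_cancel,
          ENNReal.rpow_one]
    _ ≤ x ^ (1 - lam) * y ^ lam := rpow_mul_rpow_le hlam (min_le_left _ _) (min_le_right _ _)

lemma ennreal_iSup_rpow {ι : Type*} {p : ℝ} (hp : 0 < p) (u : ι → ℝ≥0∞) :
    (⨆ i, u i) ^ p = ⨆ i, u i ^ p :=
  (ENNReal.orderIsoRpow p hp).map_iSup u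

lemma iSup_rpow_mul_iSup_rpow {ι κ : Type*} (hlam : lam ∈ Ioo (0 : ℝ) 1) (u : ι → ℝ≥0∞)
    (v : κ → ℝ≥0∞) :
    (⨆ i, u i) ^ (1 - lam) * (⨆ j, v j) ^ lam = ⨆ i, ⨆ j, u i ^ (1 - lam) * v j ^ lam := by
  rw [ennreal_iSup_rpow (sub_pos.2 hlam.2), ennreal_iSup_rpow hlam.1, ENNReal.iSup_mul]
  simp only [ENNReal.mul_iSup]

end WeightedGeometricMean

/-- The measure `μ` satisfies the Prékopa–Leindler inequality with weight `lam` for the binary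
operation `m`, which plays the role of the weighted mean of two points. Unlike `SatisfiesPL`, the
intermediate point is given by an operation rather than by a distance, so that the notion is
meaningful for geometric means and is stable under products and images. -/
def PrekopaLeindler {X : Type*} [MeasurableSpace X] (lam : ℝ) (m : X → X → X) (μ : Measure X) :
    Prop :=
  ∀ ⦃f g h : X → ℝ≥0∞⦄, Measurable f → Measurable g → Measurable h →
    (∀ x y, f x ^ (1 - lam) * g y ^ lam ≤ h (m x y)) →
    (∫⁻ x, f x ∂μ) ^ (1 - lam) * (∫⁻ x, g x ∂μ) ^ lam ≤ ∫⁻ x, h x ∂μ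

namespace PrekopaLeindler

variable {X Y : Type*} [MeasurableSpace X] [MeasurableSpace Y] {lam : ℝ}
  {m : X → X → X} {k : Y → Y → Y} {μ : Measure X} {ν : Measure Y}

lemma dirac {x : X} (hx : m x x = x) : PrekopaLeindler lam m (Measure.dirac x) := by
  intro f g h hf hg hh hfgh
  simpa only [lintegral_dirac' x hf, lintegral_dirac' x hg, lintegral_dirac' x hh, hx]
    using hfgh x x

lemma prod [SFinite ν] (hμ : PrekopaLeindler lam m μ) (hν : PrekopaLeindler lam k ν) :
    PrekopaLeindler lam (fun p q ↦ (m p.1 q.1, k p.2 q.2)) (μ.prod ν) := by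
  intro f g h hf hg hh hfgh
  rw [lintegral_prod _ hf.aemeasurable, lintegral_prod _ hg.aemeasurable,
    lintegral_prod _ hh.aemeasurable]
  refine hμ hf.lintegral_prod_right' hg.lintegral_prod_right' hh.lintegral_prod_right'
    fun x₁ x₂ ↦ ?_
  exact hν (hf.comp measurable_prodMk_left) (hg.comp measurable_prodMk_left)
    (hh.comp measurable_prodMk_left) fun y₁ y₂ ↦ hfgh (x₁, y₁) (x₂, y₂)

lemma map {φ : X → Y} (hμ : PrekopaLeindler lam m μ) (hφ : Measurable φ)
    (hmk : Function.Semiconj₂ φ m k) : PrekopaLeindler lam k (μ.map φ) := by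
  intro f g h hf hg hh hfgh
  rw [lintegral_map hf hφ, lintegral_map hg hφ, lintegral_map hh hφ]
  exact hμ (hf.comp hφ) (hg.comp hφ) (hh.comp hφ) fun x y ↦ hmk x y ▸ hfgh (φ x) (φ y)

lemma withDensity (hlam : lam ∈ Icc (0 : ℝ) 1) (hμ : PrekopaLeindler lam m μ) {ρ : X → ℝ≥0∞}
    (hρ : Measurable ρ) (hρm : ∀ x y, ρ x ^ (1 - lam) * ρ y ^ lam ≤ ρ (m x y)) :
    PrekopaLeindler lam m (μ.withDensity ρ) := by
  intro f g h hf hg hh hfgh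
  rw [lintegral_withDensity_eq_lintegral_mul _ hρ hf,
    lintegral_withDensity_eq_lintegral_mul _ hρ hg,
    lintegral_withDensity_eq_lintegral_mul _ hρ hh]
  refine hμ (hρ.mul hf) (hρ.mul hg) (hρ.mul hh) fun x y ↦ ?_
  simp only [Pi.mul_apply, mul_rpow_mul_mul_rpow hlam]
  exact mul_le_mul' (hρm x y) (hfgh x y)

lemma pi_fin {n : ℕ} {X : Fin n → Type*} [∀ i, MeasurableSpace (X i)] {m : ∀ i, X i → X i → X i}
    {μ : ∀ i, Measure (X i)} [∀ i, SigmaFinite (μ i)] (hμ : ∀ i, PrekopaLeindler lam (m i) (μ i)) :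
    PrekopaLeindler lam (fun a b i ↦ m i (a i) (b i)) (Measure.pi μ) := by
  induction n with
  | zero =>
    rw [Measure.pi_of_empty μ]
    exact dirac (Subsingleton.elim _ _)
  | succ n ih =>
    have e := measurePreserving_piFinSuccAbove μ 0
    rw [← e.symm.map_eq]
    refine ((hμ 0).prod (ih fun i ↦ hμ _)).map e.symm.measurable fun p q ↦ ?_
    refine funext (Fin.cases ?_ fun i ↦ ?_) <;> rfl

lemma pi {ι : Type*} [Fintype ι] {X : ι → Type*} [∀ i, MeasurableSpace (X i)]
    {m : ∀ i, X i → X i → X i} {μ : ∀ i, Measure (X i)} [∀ i, SigmaFinite (μ i)]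
    (hμ : ∀ i, PrekopaLeindler lam (m i) (μ i)) :
    PrekopaLeindler lam (fun a b i ↦ m i (a i) (b i)) (Measure.pi μ) := by
  let σ : Fin (Fintype.card ι) ≃ ι := (Fintype.equivFin ι).symm
  have e := measurePreserving_piCongrLeft μ σ
  rw [← e.map_eq]
  refine (pi_fin fun i ↦ hμ (σ i)).map e.measurable fun a b ↦ ?_
  refine funext (σ.surjective.forall.2 fun i ↦ ?_)
  simp only [MeasurableEquiv.coe_piCongrLeft, Equiv.piCongrLeft_apply_apply]

lemma measure_rpow_mul_le_measure_image2 (hlam : lam ∈ Ioo (0 : ℝ) 1)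
    (hμ : PrekopaLeindler lam m μ) {A B : Set X} (hA : NullMeasurableSet A μ)
    (hB : NullMeasurableSet B μ) : μ A ^ (1 - lam) * μ B ^ lam ≤ μ (image2 m A B) := by
  obtain ⟨A', hA'A, hA', hA'_ae⟩ := hA.exists_measurable_subset_ae_eq
  obtain ⟨B', hB'B, hB', hB'_ae⟩ := hB.exists_measurable_subset_ae_eq
  set C := toMeasurable μ (image2 m A B)
  have hC : MeasurableSet C := measurableSet_toMeasurable _ _
  rw [← measure_congr hA'_ae, ← measure_congr hB'_ae, ← measure_toMeasurable (image2 m A B),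
    ← lintegral_indicator_one hA', ← lintegral_indicator_one hB', ← lintegral_indicator_one hC]
  refine hμ (measurable_one.indicator hA') (measurable_one.indicator hB')
    (measurable_one.indicator hC) fun x y ↦ ?_
  by_cases hx : x ∈ A'
  · by_cases hy : y ∈ B'
    · have hxy : m x y ∈ C := subset_toMeasurable _ _ (mem_image2_of_mem (hA'A hx) (hB'B hy))
      simp [hx, hy, hxy]
    · simp [hy, hlam.1]
  · simp [hx, hlam.2]

end PrekopaLeindler

section RealLine

variable {lam : ℝ}

lemma lintegral_rpow_mul_le_of_iSup_eq (hlam : lam ∈ Icc (0 : ℝ) 1) {f g h : ℝ → ℝ≥0∞}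
    (hf : Measurable f) (hg : Measurable g) (hh : Measurable h) (hsup : ⨆ x, f x = ⨆ y, g y)
    (hfgh : ∀ x y, f x ^ (1 - lam) * g y ^ lam ≤ h ((1 - lam) * x + lam * y)) :
    (∫⁻ x, f x) ^ (1 - lam) * (∫⁻ x, g x) ^ lam ≤ ∫⁻ x, h x := by
  have min_le (x y : ℝ) : min (f x) (g y) ≤ h ((1 - lam) * x + lam * y) :=
    (min_le_rpow_mul_rpow hlam _ _).trans (hfgh x y)
  calc (∫⁻ x, f x) ^ (1 - lam) * (∫⁻ x, g x) ^ lam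
      ≤ ENNReal.ofReal (1 - lam) * (∫⁻ x, f x) + ENNReal.ofReal lam * (∫⁻ x, g x) :=
        ennreal_geom_mean_le_arith_mean hlam _ _
    _ = ENNReal.ofReal |1 - lam| * (∫⁻ x, f x) + ENNReal.ofReal |lam| * (∫⁻ x, g x) := by
        rw [abs_of_nonneg (sub_nonneg.2 hlam.2), abs_of_nonneg hlam.1]
    _ ≤ ∫⁻ x, h x := ofReal_abs_mul_lintegral_add_le _ _ hf hg hh hsup min_le

lemma lintegral_rpow_mul_le_of_iSup_ne_top (hlam : lam ∈ Ioo (0 : ℝ) 1) {f g h : ℝ → ℝ≥0∞}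
    (hf : Measurable f) (hg : Measurable g) (hh : Measurable h) (hf_top : ⨆ x, f x ≠ ∞)
    (hg_top : ⨆ x, g x ≠ ∞)
    (hfgh : ∀ x y, f x ^ (1 - lam) * g y ^ lam ≤ h ((1 - lam) * x + lam * y)) :
    (∫⁻ x, f x) ^ (1 - lam) * (∫⁻ x, g x) ^ lam ≤ ∫⁻ x, h x := by
  have hlam' : lam ∈ Icc (0 : ℝ) 1 := Ioo_subset_Icc_self hlam
  set a := ⨆ x, f x with ha
  set b := ⨆ x, g x with hb
  obtain ha₀ | ha₀ := eq_or_ne a 0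
  · simp [ENNReal.iSup_eq_zero.1 ha₀, hlam.2]
  obtain hb₀ | hb₀ := eq_or_ne b 0
  · simp [ENNReal.iSup_eq_zero.1 hb₀, hlam.1]
  have iSup_eq : ⨆ x, a⁻¹ * f x = ⨆ y, b⁻¹ * g y := by
    rw [← ENNReal.mul_iSup, ← ENNReal.mul_iSup, ← ha, ← hb, ENNReal.inv_mul_cancel ha₀ hf_top,
      ENNReal.inv_mul_cancel hb₀ hg_top]
  set c := a ^ (1 - lam) * b ^ lam
  set d := a⁻¹ ^ (1 - lam) * b⁻¹ ^ lam
  have hcd : c * d = 1 := by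
    rw [← mul_rpow_mul_mul_rpow hlam', ENNReal.mul_inv_cancel ha₀ hf_top,
      ENNReal.mul_inv_cancel hb₀ hg_top, ENNReal.one_rpow, ENNReal.one_rpow, one_mul]
  have scaled_le : (a⁻¹ * ∫⁻ x, f x) ^ (1 - lam) * (b⁻¹ * ∫⁻ x, g x) ^ lam ≤ d * ∫⁻ x, h x := by
    rw [← lintegral_const_mul _ hf, ← lintegral_const_mul _ hg, ← lintegral_const_mul _ hh]
    refine lintegral_rpow_mul_le_of_iSup_eq hlam' (hf.const_mul _) (hg.const_mul _)
      (hh.const_mul _) iSup_eq fun x y ↦ ?_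
    rw [mul_rpow_mul_mul_rpow hlam']
    exact mul_le_mul_right (hfgh x y) d
  calc (∫⁻ x, f x) ^ (1 - lam) * (∫⁻ x, g x) ^ lam
      = c * (d * ((∫⁻ x, f x) ^ (1 - lam) * (∫⁻ x, g x) ^ lam)) := by
        rw [← mul_assoc, hcd, one_mul]
    _ = c * ((a⁻¹ * ∫⁻ x, f x) ^ (1 - lam) * (b⁻¹ * ∫⁻ x, g x) ^ lam) := by
        rw [mul_rpow_mul_mul_rpow hlam']
    _ ≤ c * (d * ∫⁻ x, h x) := mul_le_mul_right scaled_le c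
    _ = ∫⁻ x, h x := by rw [← mul_assoc, hcd, one_mul]

theorem prekopaLeindler_volume_real (hlam : lam ∈ Ioo (0 : ℝ) 1) :
    PrekopaLeindler lam (fun x y : ℝ ↦ (1 - lam) * x + lam * y) volume := by
  intro f g h hf hg hh hfgh
  rw [lintegral_eq_iSup_lintegral_min_natCast volume hf,
    lintegral_eq_iSup_lintegral_min_natCast volume hg, iSup_rpow_mul_iSup_rpow hlam]
  have iSup_min_ne_top (u : ℝ → ℝ≥0∞) (i : ℕ) : ⨆ x, min (u x) i ≠ ∞ :=
    ne_top_of_le_ne_top (ENNReal.natCast_ne_top i) (iSup_le fun x ↦ min_le_right _ _)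
  refine iSup₂_le fun i j ↦ lintegral_rpow_mul_le_of_iSup_ne_top hlam (hf.min measurable_const)
    (hg.min measurable_const) hh (iSup_min_ne_top f i) (iSup_min_ne_top g j) fun x y ↦ ?_
  exact (rpow_mul_rpow_le (Ioo_subset_Icc_self hlam) (min_le_left _ _) (min_le_left _ _)).trans
    (hfgh x y)

end RealLine

section PositiveOrthant

variable {lam : ℝ}

lemma map_exp_withDensity_exp :
    (volume.withDensity fun x ↦ ENNReal.ofReal (Real.exp x)).map Real.exp
      = volume.restrict (Ioi (0 : ℝ)) := by
  ext s hs
  have hs' : MeasurableSet (Real.exp ⁻¹' s) := Real.measurable_exp hs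
  rw [Measure.map_apply Real.measurable_exp hs, withDensity_apply _ hs',
    lintegral_deriv_eq_volume_image_of_monotoneOn hs'
      (fun x _ ↦ (Real.hasDerivAt_exp x).hasDerivWithinAt) (Real.exp_monotone.monotoneOn _),
    image_preimage_eq_inter_range, Real.range_exp, Measure.restrict_apply hs]

lemma exp_arith_mean_eq_geom_mean_exp (lam x y : ℝ) :
    Real.exp ((1 - lam) * x + lam * y) = Real.exp x ^ (1 - lam) * Real.exp y ^ lam := by
  rw [← Real.exp_mul, ← Real.exp_mul, ← Real.exp_add, mul_comm x, mul_comm y]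

lemma prekopaLeindler_volume_restrict_Ioi (hlam : lam ∈ Ioo (0 : ℝ) 1) :
    PrekopaLeindler lam (fun x y : ℝ ↦ x ^ (1 - lam) * y ^ lam) (volume.restrict (Ioi 0)) := by
  rw [← map_exp_withDensity_exp]
  refine ((prekopaLeindler_volume_real hlam).withDensity (Ioo_subset_Icc_self hlam)
    Real.measurable_exp.ennreal_ofReal fun x y ↦ ?_).map Real.measurable_exp
    (exp_arith_mean_eq_geom_mean_exp lam)
  rw [exp_arith_mean_eq_geom_mean_exp, ENNReal.ofReal_mul (by positivity),
    ENNReal.ofReal_rpow_of_pos (Real.exp_pos x), ENNReal.ofReal_rpow_of_pos (Real.exp_pos y)]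

lemma prekopaLeindler_volume_restrict_pi_Ioi {ι : Type*} [Fintype ι]
    (hlam : lam ∈ Ioo (0 : ℝ) 1) :
    PrekopaLeindler lam (fun a b : ι → ℝ ↦ fun i ↦ a i ^ (1 - lam) * b i ^ lam)
      (volume.restrict (univ.pi fun _ ↦ Ioi 0)) := by
  rw [volume_pi, Measure.restrict_pi_pi]
  exact PrekopaLeindler.pi fun _ ↦ prekopaLeindler_volume_restrict_Ioi hlam

end PositiveOrthant

theorem statement17_general {ι : Type*} [Fintype ι] {lam : ℝ} (hlam : lam ∈ Ioo (0 : ℝ) 1)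
    {A B : Set (ι → ℝ)} (hApos : ∀ x ∈ A, ∀ i, 0 < x i) (hBpos : ∀ x ∈ B, ∀ i, 0 < x i)
    (hA : NullMeasurableSet A) (hB : NullMeasurableSet B) :
    volume A ^ (1 - lam) * volume B ^ lam
      ≤ volume (image2 (fun a b : ι → ℝ ↦ fun i ↦ a i ^ (1 - lam) * b i ^ lam) A B) := by
  have restrict_eq {S : Set (ι → ℝ)} (hS : ∀ x ∈ S, ∀ i, 0 < x i) :
      volume.restrict (univ.pi fun _ ↦ Ioi 0) S = volume S :=
    Measure.restrict_eq_self volume fun x hx i _ ↦ hS x hx i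
  calc volume A ^ (1 - lam) * volume B ^ lam
      = volume.restrict (univ.pi fun _ ↦ Ioi 0) A ^ (1 - lam)
        * volume.restrict (univ.pi fun _ ↦ Ioi 0) B ^ lam := by
        rw [restrict_eq hApos, restrict_eq hBpos]
    _ ≤ volume.restrict (univ.pi fun _ ↦ Ioi 0) (image2 _ A B) :=
        (prekopaLeindler_volume_restrict_pi_Ioi hlam).measure_rpow_mul_le_measure_image2 hlam
          (hA.mono Measure.restrict_le_self) (hB.mono Measure.restrict_le_self)
    _ ≤ volume (image2 _ A B) := Measure.restrict_apply_le _ _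

/-- Corollary `c:logBM`: the multiplicative Brunn–Minkowski inequality
for the coordinatewise geometric mean of sets in the positive orthant. -/
theorem statement17 {n : ℕ} (lam : ℝ) (hlam : lam ∈ Ioo (0:ℝ) 1)
    (A B : Set (Fin n → ℝ))
    (hApos : ∀ x ∈ A, ∀ i, 0 < x i) (hBpos : ∀ x ∈ B, ∀ i, 0 < x i)
    (hAm : MeasurableSet A) (hBm : MeasurableSet B)
    (hCm : MeasurableSet (Set.image2
      (fun a b : Fin n → ℝ => fun i => a i ^ (1 - lam) * b i ^ lam) A B)) :
    volume A ^ (1 - lam) * volume B ^ lam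
      ≤ volume (Set.image2
          (fun a b : Fin n → ℝ => fun i => a i ^ (1 - lam) * b i ^ lam) A B) := by
  exact statement17_general hlam hApos hBpos hAm.nullMeasurableSet hBm.nullMeasurableSet

end
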